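/- Let G be a group, S and T G-sets, and ρ : ℤ[S] → ℤ[T] a G-equivariant additive homomorphism. Let n ≥ 1 be an integer and suppose y₁, …, y_ℓ ∈ D_n are representatives of the G-orbits of D_n (i.e. every element of D_n equals g • y_k for some g ∈ G and some k). For each k, let A_k = {z ∈ D₁ : y_k ∩_S z = ∅ and y_k ∩_ρ z ≠ ∅}. Then every element of D_{n+1} can be written as g • (y_k + z) for some g ∈ G, some 1 ≤ k ≤ ℓ, and some z ∈ A_k; moreover each such y_k + z belongs to D_{n+1}. -/

import Mathlib

open Finsupp

/-- Action of `g : G` on the permutation module `ℤ[S]`, permuting the basis. -/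
def gact {G S : Type*} [Group G] [MulAction G S] (g : G) (x : S →₀ ℤ) : S →₀ ℤ :=
  Finsupp.equivMapDomain (MulAction.toPerm g) x

/-- The ℓ1-norm on `ℤ[S]`. -/
def l1 {S : Type*} (x : S →₀ ℤ) : ℕ := x.support.sum fun s => (x s).natAbs

/-- `x` is a part of `y`, written `x ⪯_S y`. -/
def IsPart {S : Type*} (x y : S →₀ ℤ) : Prop := ∀ s, x s ^ 2 ≤ x s * y s

/-- `x` and `y` have trivial S-intersection. -/
def SIntTrivial {S : Type*} (x y : S →₀ ℤ) : Prop := ∀ s, 0 ≤ x s * y s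

/-- membership in `D₁ = S ∪ (-S) ⊆ ℤ[S]`. -/
def InD1 {S : Type*} (x : S →₀ ℤ) : Prop :=
  ∃ s, x = Finsupp.single s 1 ∨ x = Finsupp.single s (-1)

/-- `x` and `y` have nontrivial ρ-intersection. -/
def RhoInt {S T : Type*} (ρ : (S →₀ ℤ) →+ (T →₀ ℤ)) (x y : S →₀ ℤ) : Prop :=
  ∃ x₁ y₁, InD1 x₁ ∧ InD1 y₁ ∧ IsPart x₁ x ∧ IsPart y₁ y ∧ ∃ t, ρ x₁ t * ρ y₁ t < 0

/-- membership in `D_n`. -/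
def InD {S T : Type*} (ρ : (S →₀ ℤ) →+ (T →₀ ℤ)) (n : ℕ) (x : S →₀ ℤ) : Prop :=
  ∃ c : ℕ → (S →₀ ℤ), (∀ i < n, InD1 (c i)) ∧ x = ∑ i ∈ Finset.range n, c i ∧
    ∀ k, 1 ≤ k → k < n →
      SIntTrivial (∑ i ∈ Finset.range k, c i) (c k) ∧
      RhoInt ρ (∑ i ∈ Finset.range k, c i) (c k)

/-- `x` is ρ-connected. -/
def RhoConnected {S T : Type*} (ρ : (S →₀ ℤ) →+ (T →₀ ℤ)) (x : S →₀ ℤ) : Prop :=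
  ∃ n, 1 ≤ n ∧ InD ρ n x

/-- `ρ` is G-equivariant. -/
def Equivariant (G : Type*) {S T : Type*} [Group G] [MulAction G S] [MulAction G T]
    (ρ : (S →₀ ℤ) →+ (T →₀ ℤ)) : Prop :=
  ∀ (g : G) (x : S →₀ ℤ), ρ (gact g x) = gact g (ρ x)

/-- `S` has finitely many G-orbits. -/
def FinitelyManyOrbits (G S : Type*) [Group G] [MulAction G S] : Prop :=
  ∃ R : Finset S, ∀ s : S, ∃ (g : G) (r : S), r ∈ R ∧ g • r = s

/-- every element of `T` has finite stabilizer. -/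
def FiniteStabilizers (G T : Type*) [Group G] [MulAction G T] : Prop :=
  ∀ t : T, {g : G | g • t = t}.Finite

theorem gact_apply_aux {G S : Type*} [Group G] [MulAction G S] (g : G) (x : S →₀ ℤ) (s : S) :
    gact g x s = x (g⁻¹ • s) := by
  simp [gact, Finsupp.equivMapDomain_apply]

theorem gact_add_aux {G S : Type*} [Group G] [MulAction G S] (g : G) (x y : S →₀ ℤ) :
    gact g (x + y) = gact g x + gact g y := by
  ext s
  simp [gact_apply_aux]

theorem gact_inv_aux {G S : Type*} [Group G] [MulAction G S] (g : G) (x : S →₀ ℤ) :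
    gact g⁻¹ (gact g x) = x := by
  ext s
  simp [gact_apply_aux]

theorem gact_inv_aux2 {G S : Type*} [Group G] [MulAction G S] (g : G) (x : S →₀ ℤ) :
    gact g (gact g⁻¹ x) = x := by
  ext s
  simp [gact_apply_aux]

theorem InD1.gact_aux {G S : Type*} [Group G] [MulAction G S] (g : G) {x : S →₀ ℤ}
    (h : InD1 x) : InD1 (gact g x) := by
  obtain ⟨s, rfl | rfl⟩ := h
  · exact ⟨g • s, Or.inl (by simp [gact])⟩
  · exact ⟨g • s, Or.inr (by simp only [gact, Finsupp.equivMapDomain_single]; rfl)⟩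

theorem IsPart.gact_aux {G S : Type*} [Group G] [MulAction G S] (g : G) {x y : S →₀ ℤ}
    (h : IsPart x y) : IsPart (gact g x) (gact g y) := by
  intro s
  simpa only [gact_apply_aux] using h (g⁻¹ • s)

theorem SIntTrivial.gact_aux {G S : Type*} [Group G] [MulAction G S] (g : G) {x y : S →₀ ℤ}
    (h : SIntTrivial x y) : SIntTrivial (gact g x) (gact g y) := by
  intro s
  simpa only [gact_apply_aux] using h (g⁻¹ • s)

theorem RhoInt.gact_aux {G S T : Type*} [Group G] [MulAction G S] [MulAction G T]
    {ρ : (S →₀ ℤ) →+ (T →₀ ℤ)} (hρ : Equivariant G ρ) (g : G) {x y : S →₀ ℤ}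
    (h : RhoInt ρ x y) : RhoInt ρ (gact g x) (gact g y) := by
  obtain ⟨a, b, ha, hb, hax, hby, t, ht⟩ := h
  refine ⟨gact g a, gact g b, ha.gact_aux g, hb.gact_aux g, hax.gact_aux g, hby.gact_aux g,
    g • t, ?_⟩
  rw [hρ, hρ, gact_apply_aux, gact_apply_aux, inv_smul_smul]
  exact ht

/-- Inductive step in the proof that `D_n` has finitely many orbits: orbit
representatives for `D_{n+1}` from orbit representatives for `D_n`. -/
theorem stmt_12 {G S T : Type*} [Group G] [MulAction G S] [MulAction G T]
    (ρ : (S →₀ ℤ) →+ (T →₀ ℤ)) (hρ : Equivariant G ρ)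
    (n : ℕ) (hn : 1 ≤ n) (ℓ : ℕ) (y : Fin ℓ → (S →₀ ℤ))
    (hy : ∀ k, InD ρ n (y k))
    (hrep : ∀ x : S →₀ ℤ, InD ρ n x → ∃ (g : G) (k : Fin ℓ), x = gact g (y k)) :
    (∀ x : S →₀ ℤ, InD ρ (n + 1) x →
      ∃ (g : G) (k : Fin ℓ) (z : S →₀ ℤ),
        InD1 z ∧ SIntTrivial (y k) z ∧ RhoInt ρ (y k) z ∧ x = gact g (y k + z)) ∧
    (∀ (k : Fin ℓ) (z : S →₀ ℤ), InD1 z → SIntTrivial (y k) z → RhoInt ρ (y k) z →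
      InD ρ (n + 1) (y k + z)) := by
  constructor
  · rintro x ⟨c, hc, rfl, hk⟩
    obtain ⟨g, k, hg⟩ := hrep (∑ i ∈ Finset.range n, c i)
      ⟨c, fun i hi => hc i (by omega), rfl, fun k h1 h2 => hk k h1 (by omega)⟩
    obtain ⟨h1, h2⟩ := hk n hn (by omega)
    rw [hg] at h1 h2
    refine ⟨g, k, gact g⁻¹ (c n), (hc n (by omega)).gact_aux _, ?_, ?_, ?_⟩
    · simpa only [gact_inv_aux] using h1.gact_aux g⁻¹
    · simpa only [gact_inv_aux] using h2.gact_aux hρ g⁻¹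
    · rw [Finset.sum_range_succ, hg, gact_add_aux, gact_inv_aux2]
  · intro k z hz h1 h2
    obtain ⟨c, hc, hs, hk⟩ := hy k
    have key : ∀ m ≤ n, ∑ i ∈ Finset.range m, (if i < n then c i else z)
        = ∑ i ∈ Finset.range m, c i := by
      intro m hm
      refine Finset.sum_congr rfl fun i hi => ?_
      rw [Finset.mem_range] at hi
      rw [if_pos (by omega)]
    refine ⟨fun i => if i < n then c i else z, ?_, ?_, ?_⟩
    · intro i _
      dsimp only
      split_ifs with h
      · exact hc i h
      · exact hz
    · rw [Finset.sum_range_succ, key n le_rfl, if_neg (lt_irrefl n), hs]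
    · intro m hm1 hm2
      rw [key m (by omega)]
      dsimp only
      rcases Nat.lt_or_ge m n with h | h
      · rw [if_pos h]
        exact hk m hm1 h
      · obtain rfl : m = n := by omega
        rw [if_neg (lt_irrefl m), ← hs]
        exact ⟨h1, h2⟩
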